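/- Let X be a proper geodesic metric space, let C ⊆ X be a closed totally convex subset, and let p ∈ C. If 0 < inj_X(p) < conj(X), then inj_X(p) = inj_C(p), where inj_C(p) is the injectivity radius of p computed in the metric space C with the induced metric. -/

import Mathlib

/-!
Below the conjugate radius the endpoint map is locally injective on the space of geodesics issuing
in `p`, which is compact once their length is bounded. Hence pairs of distinct geodesics with the
same endpoint cannot merge in the limit, and `inj p` is attained: two distinct geodesics `γ`, `σ` of
length `inj p` join `p` to some `q`.

Klingenberg's argument shows that they fit together to a local geodesic at `q`. Otherwise a point of
`γ` and a point of `σ`, both arbitrarily close to `q`, are joined by a segment shorter than the way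
through `q`, which therefore lies in the open ball of radius `inj p` about `p`. There the geodesic
from `p` is unique, so it depends continuously on its endpoint, and the segment lifts to a path of
geodesics from near `γ` to near `σ` whose endpoints all stay near `q`. This is impossible, since `γ`
is isolated among the geodesics ending at `q`.

So `γ` followed by the reverse of `σ` is a local geodesic loop at `p`. It lies in any totally convex
`C` containing `p`, which makes `q` a cut point of `p` in `C` as well.
-/

open Set Metric Topology Filter
open scoped ENNReal

noncomputable section

namespace InjSoul

/-- The unit interval `[0,1] ⊆ ℝ`. -/
abbrev I01 : Set ℝ := Set.Icc (0 : ℝ) 1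

variable {X : Type*} [MetricSpace X]

/-- `0` as a point of `[0,1]`. -/
def pt0 : I01 := ⟨0, by norm_num⟩

/-- `1` as a point of `[0,1]`. -/
def pt1 : I01 := ⟨1, by norm_num⟩

/-- `c : [0,1] → X` is a geodesic of speed (= length) `L`. -/
def IsGeod (c : C(I01, X)) (L : ℝ) : Prop :=
  0 ≤ L ∧ ∀ s t : I01, dist (c s) (c t) = L * |(s : ℝ) - (t : ℝ)|

/-- `γ : [0,1] → X` is a local geodesic of speed (= length) `L`. -/
def IsLocGeod (γ : C(I01, X)) (L : ℝ) : Prop :=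
  0 ≤ L ∧ ∀ t : I01, ∃ ε > 0, ∀ s s' : I01,
    |(s : ℝ) - (t : ℝ)| < ε → |(s' : ℝ) - (t : ℝ)| < ε →
      dist (γ s) (γ s') = L * |(s : ℝ) - (s' : ℝ)|

/-- `X` is a geodesic space: any two points are joined by a geodesic. -/
def GeodesicSpace (X : Type*) [MetricSpace X] : Prop :=
  ∀ x y : X, ∃ (c : C(I01, X)) (L : ℝ), IsGeod c L ∧ c pt0 = x ∧ c pt1 = y

/-- The cut locus of `p`: all points joined to `p` by at least two distinct geodesics. -/
def Cut (p : X) : Set X :=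
  {q | ∃ (γ σ : C(I01, X)) (Lγ Lσ : ℝ), IsGeod γ Lγ ∧ IsGeod σ Lσ ∧
    γ pt0 = p ∧ γ pt1 = q ∧ σ pt0 = p ∧ σ pt1 = q ∧ γ ≠ σ}

/-- The injectivity radius of `p`, an element of `[0,∞]` (`∞` if `Cut p = ∅`). -/
def inj (p : X) : ℝ≥0∞ := ⨅ q ∈ Cut p, edist p q

/-- The minimal cut locus of `p`: points `γ t₀`, `t₀ ∈ (0,1)`, on a nontrivial local geodesic
`γ` issuing in `p` such that `γ` is minimizing on `[0,t₀]` but on no larger interval `[0,t]`. -/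
def MinCut (p : X) : Set X :=
  {q | ∃ (γ : C(I01, X)) (L : ℝ) (t₀ : ℝ) (ht₀ : t₀ ∈ Set.Ioo (0 : ℝ) 1),
      IsLocGeod γ L ∧ 0 < L ∧ γ pt0 = p ∧ γ ⟨t₀, Set.mem_Icc_of_Ioo ht₀⟩ = q ∧
      dist p q = L * t₀ ∧
      ∀ t : ℝ, ∀ ht : t ∈ Set.Ioc t₀ 1,
        dist p (γ ⟨t, ⟨(ht₀.1.trans ht.1).le, ht.2⟩⟩) ≠ L * t}

/-- The minimal radius of `p`, an element of `[0,∞]` (`∞` if `MinCut p = ∅`). -/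
def minRad (p : X) : ℝ≥0∞ := ⨅ q ∈ MinCut p, edist p q

/-- The space `X̃_p` of local geodesics issuing in `p` (including the constant map), viewed
as a subset of the continuous maps `C([0,1], X)` whose metric is the uniform metric `ρ`. -/
def LocGeodFrom (p : X) : Set C(I01, X) := {γ | (∃ L, IsLocGeod γ L) ∧ γ pt0 = p}

/-- The endpoint map `exp_p : X̃_p → X`, `γ ↦ γ 1`. -/
def endpt : C(I01, X) → X := fun γ => γ pt1

/-- `γ 1` is conjugate to `p = γ 0` along the local geodesic `γ`: no neighborhood `U` of `γ`
in `X̃_p` is mapped homeomorphically onto its image by the endpoint map. -/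
def ConjugateAlong (p : X) (γ : C(I01, X)) : Prop :=
  γ ∈ LocGeodFrom p ∧
    ¬ ∃ U : Set C(I01, X), U ⊆ LocGeodFrom p ∧ U ∈ 𝓝[LocGeodFrom p] γ ∧
      Topology.IsEmbedding (U.restrict endpt)

/-- The conjugate radius of `p`: the infimum of lengths of local geodesics issuing in `p`
along which the endpoint is conjugate to `p` (`∞` if there are none). -/
def conjRad (p : X) : ℝ≥0∞ :=
  sInf {l | ∃ (γ : C(I01, X)) (L : ℝ), IsLocGeod γ L ∧ γ pt0 = p ∧
    ConjugateAlong p γ ∧ l = ENNReal.ofReal L}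

/-- The conjugate radius of the space `X`. -/
def conjSpace (X : Type*) [MetricSpace X] : ℝ≥0∞ := ⨅ p : X, conjRad p


/-- A subset `A ⊆ X` is totally convex: every two of its points are joined by a local
geodesic of `X`, and every local geodesic of `X` with both endpoints in `A` lies in `A`. -/
def TotallyConvex {X : Type*} [MetricSpace X] (A : Set X) : Prop :=
  (∀ x ∈ A, ∀ y ∈ A, ∃ (γ : C(I01, X)) (L : ℝ), IsLocGeod γ L ∧ γ pt0 = x ∧ γ pt1 = y) ∧
  ∀ (γ : C(I01, X)) (L : ℝ), IsLocGeod γ L → γ pt0 ∈ A → γ pt1 ∈ A → ∀ t : I01, γ t ∈ A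

section Topology

lemma isCompact_setOf_lipschitzWith_mapsTo {Y Z : Type*} [PseudoMetricSpace Y] [PseudoMetricSpace Z]
    (K : NNReal) {B : Set Z} (hB : IsCompact B) :
    IsCompact {f : C(Y, Z) | LipschitzWith K f ∧ ∀ y, f y ∈ B} := by
  apply ArzelaAscoli.isCompact_of_equicontinuous
  · have himage : ContinuousMap.toFun '' {f : C(Y, Z) | LipschitzWith K f ∧ ∀ y, f y ∈ B} =
        {f : Y → Z | LipschitzWith K f} ∩ univ.pi fun _ ↦ B := by
      ext f
      refine ⟨?_, fun hf ↦ ⟨⟨f, hf.1.continuous⟩, ⟨hf.1, fun y ↦ hf.2 y (mem_univ y)⟩, rfl⟩⟩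
      rintro ⟨f, hf, rfl⟩
      exact ⟨hf.1, fun y _ ↦ hf.2 y⟩
    rw [himage]
    exact (isCompact_univ_pi fun _ ↦ hB).inter_left (isClosed_setOfPred_lipschitzWith K)
  · exact (LipschitzWith.uniformEquicontinuous _ K fun f ↦ f.2.1).equicontinuous

lemma isCompact_compl_pullbackDiagonal {Y Z : Type*} [TopologicalSpace Y] [CompactSpace Y]
    [TopologicalSpace Z] [T2Space Z] {f : Y → Z} (hf : Continuous f)
    (hinj : IsLocallyInjective f) : IsCompact (f.pullbackDiagonalᶜ) := by
  have : CompactSpace (f.Pullback f) := isCompact_iff_compactSpace.1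
    (isClosed_eq (hf.comp continuous_fst) (hf.comp continuous_snd)).isCompact
  exact (isLocallyInjective_iff_isOpen_diagonal.1 hinj).isClosed_compl.isCompact

lemma exists_mem_nhds_eventually_not_joinedIn {Y Z : Type*} [PseudoMetricSpace Y]
    [TopologicalSpace Z] [T2Space Z] {K : Set Y} {f : Y → Z} (hK : IsCompact K)
    (hf : ContinuousOn f K) {x y : Y} (hx : x ∈ K) (hy : y ∈ K)
    (hinj : ∃ U ∈ 𝓝[K] x, InjOn f U) (hxy : f x = f y) (hne : x ≠ y) :
    ∃ V ∈ 𝓝 (f x), ∀ᶠ w : Y × Y in 𝓝 (x, y), ¬ JoinedIn (K ∩ f ⁻¹' V) w.1 w.2 := by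
  obtain ⟨U, hU, hinj⟩ := hinj
  obtain ⟨r, hr, hrU⟩ := Metric.mem_nhdsWithin_iff.1 hU
  have hisol {z : Y} (hz : z ∈ K) (hzr : dist z x < r) (hfz : f z = f x) : z = x :=
    hinj (hrU ⟨hzr, hz⟩) (hrU ⟨mem_ball_self hr, hx⟩) hfz
  have hry : r ≤ dist y x := not_lt.1 fun h ↦ hne (hisol hy h hxy.symm).symm
  have hS : IsCompact (f '' (K ∩ sphere x (r / 2))) :=
    (hK.inter_right isClosed_sphere).image_of_continuousOn (hf.mono inter_subset_left)
  have hxS : f x ∉ f '' (K ∩ sphere x (r / 2)) := by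
    rintro ⟨z, ⟨hzK, hzx⟩, hfz⟩
    rw [mem_sphere] at hzx
    rw [hisol hzK (by linarith) hfz, dist_self] at hzx
    linarith
  refine ⟨_, hS.isClosed.isOpen_compl.mem_nhds hxS, ?_⟩
  have hw1 : ∀ᶠ w : Y × Y in 𝓝 (x, y), dist w.1 x < r / 2 :=
    ContinuousAt.eventually_lt (by fun_prop) continuousAt_const (by simpa using hr)
  have hw2 : ∀ᶠ w : Y × Y in 𝓝 (x, y), r / 2 < dist w.2 x :=
    ContinuousAt.eventually_lt continuousAt_const (by fun_prop) (by dsimp only; linarith)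
  filter_upwards [hw1, hw2] with w hw1 hw2
  rintro ⟨F, hF⟩
  -- The path crosses the sphere of radius `r / 2`, whose image `V` avoids.
  obtain ⟨t, ht⟩ := mem_range_of_exists_le_of_exists_ge
    (show Continuous fun t ↦ dist (F t) x by fun_prop) (c := r / 2)
    ⟨0, by simpa using hw1.le⟩ ⟨1, by simpa using hw2.le⟩
  exact (hF t).2 ⟨F t, ⟨(hF t).1, ht⟩, rfl⟩

end Topology

@[simp] lemma coe_pt0 : ((pt0 : I01) : ℝ) = 0 := rfl

@[simp] lemma coe_pt1 : ((pt1 : I01) : ℝ) = 1 := rfl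

section Geodesics

variable {γ : C(I01, X)} {L : ℝ}

lemma IsGeod.dist_pt0_left (h : IsGeod γ L) (s : I01) : dist (γ pt0) (γ s) = L * s := by
  rw [h.2, coe_pt0, zero_sub, abs_neg, abs_of_nonneg s.2.1]

lemma IsGeod.dist_pt1_right (h : IsGeod γ L) (s : I01) : dist (γ s) (γ pt1) = L * (1 - s) := by
  rw [h.2, coe_pt1, abs_sub_comm, abs_of_nonneg (sub_nonneg.2 s.2.2)]

lemma IsGeod.dist_endpoints (h : IsGeod γ L) : dist (γ pt0) (γ pt1) = L := by
  simpa using h.dist_pt0_left pt1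

lemma IsGeod.lipschitzWith (h : IsGeod γ L) : LipschitzWith L.toNNReal γ :=
  .of_dist_le_mul fun s t ↦ by rw [h.2, Real.coe_toNNReal _ h.1, Subtype.dist_eq, Real.dist_eq]

lemma IsGeod.isLocGeod (h : IsGeod γ L) : IsLocGeod γ L :=
  ⟨h.1, fun _ ↦ ⟨1, one_pos, fun s s' _ _ ↦ h.2 s s'⟩⟩

lemma IsGeod.path_symm {x y : X} {γ : Path x y} (h : IsGeod γ.toContinuousMap L) :
    IsGeod γ.symm.toContinuousMap L := by
  refine ⟨h.1, fun s t ↦ (h.2 _ _).trans ?_⟩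
  rw [unitInterval.coe_symm_eq, unitInterval.coe_symm_eq, sub_sub_sub_cancel_left, abs_sub_comm]

lemma IsGeod.comp_isometry {Y : Type*} [MetricSpace Y] {f : C(X, Y)} (hf : Isometry f)
    (h : IsGeod γ L) : IsGeod (f.comp γ) L :=
  ⟨h.1, fun s t ↦ (hf.dist_eq _ _).trans (h.2 s t)⟩

/-- The initial segments `u ↦ γ (s * u)` of a curve `γ`, reparametrized on `[0,1]`, as a
continuous family in `s`. -/
def initialSegment (γ : C(I01, X)) : C(I01, C(I01, X)) :=
  (γ.comp ⟨fun x : I01 × I01 ↦ x.1 * x.2, by fun_prop⟩).curry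

lemma initialSegment_apply (γ : C(I01, X)) (s u : I01) : initialSegment γ s u = γ (s * u) := rfl

lemma initialSegment_apply_pt0 (γ : C(I01, X)) (s : I01) : initialSegment γ s pt0 = γ pt0 :=
  congrArg γ (mul_zero s)

lemma initialSegment_apply_pt1 (γ : C(I01, X)) (s : I01) : initialSegment γ s pt1 = γ s :=
  congrArg γ (mul_one s)

lemma initialSegment_pt1 (γ : C(I01, X)) : initialSegment γ pt1 = γ :=
  ContinuousMap.ext fun u ↦ congrArg γ (one_mul u)

lemma IsGeod.initialSegment (h : IsGeod γ L) (s : I01) :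
    IsGeod (initialSegment γ s) (L * s) := by
  refine ⟨mul_nonneg h.1 s.2.1, fun u v ↦ ?_⟩
  rw [initialSegment_apply, initialSegment_apply, h.2, Set.Icc.coe_mul, Set.Icc.coe_mul,
    ← mul_sub, abs_mul, abs_of_nonneg s.2.1, mul_assoc]

end Geodesics

section LocalGeodesics

variable {L : ℝ}

lemma isLocGeod_iff_eventually {γ : C(I01, X)} :
    IsLocGeod γ L ↔ 0 ≤ L ∧ ∀ t, ∀ᶠ u : I01 × I01 in 𝓝 (t, t),
      dist (γ u.1) (γ u.2) = L * |(u.1 : ℝ) - u.2| := by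
  simp only [IsLocGeod, Metric.eventually_nhds_iff, Prod.forall, Prod.dist_eq, max_lt_iff,
    and_imp, Subtype.dist_eq, Real.dist_eq]

lemma IsLocGeod.eventually_dist_eq_of_eqOn_comp {γ η : C(I01, X)} {φ : I01 → I01} {A : Set I01}
    {k : ℝ} (hη : IsLocGeod η L) (hφ : Continuous φ) (hγ : EqOn γ (η ∘ φ) A)
    (hk : ∀ s ∈ A, ∀ s' ∈ A, |(φ s : ℝ) - φ s'| = k * |(s : ℝ) - s'|) (t : I01) :
    ∀ᶠ u : I01 × I01 in 𝓝 (t, t), u.1 ∈ A → u.2 ∈ A →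
      dist (γ u.1) (γ u.2) = k * L * |(u.1 : ℝ) - u.2| := by
  have hφt : ∀ᶠ u : I01 × I01 in 𝓝 (t, t), dist (η (φ u.1)) (η (φ u.2)) =
      L * |(φ u.1 : ℝ) - φ u.2| :=
    ((hφ.prodMap hφ).tendsto (t, t)).eventually ((isLocGeod_iff_eventually.1 hη).2 (φ t))
  filter_upwards [hφt] with u hu h1 h2
  rw [hγ h1, hγ h2, mul_comm k, mul_assoc, ← hk _ h1 _ h2]
  exact hu

/-- The map stretching `[0, 1/2]` onto `[0, 1]`, along which `Path.trans` runs through its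
first path; constant beyond `1/2`. -/
def stretchLeft : C(I01, I01) :=
  ⟨fun t ↦ projIcc 0 1 zero_le_one (2 * (t : ℝ)), continuous_projIcc.comp (by fun_prop)⟩

/-- The map stretching `[1/2, 1]` onto `[0, 1]`, along which `Path.trans` runs through its
second path; constant before `1/2`. -/
def stretchRight : C(I01, I01) :=
  ⟨fun t ↦ projIcc 0 1 zero_le_one (2 * (t : ℝ) - 1), continuous_projIcc.comp (by fun_prop)⟩

lemma coe_stretchLeft {t : I01} (ht : (t : ℝ) ≤ 1 / 2) : (stretchLeft t : ℝ) = 2 * t :=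
  congrArg Subtype.val (projIcc_of_mem (zero_le_one' ℝ)
    ((unitInterval.mul_pos_mem_iff two_pos).2 ⟨t.2.1, ht⟩))

lemma coe_stretchRight {t : I01} (ht : 1 / 2 ≤ (t : ℝ)) : (stretchRight t : ℝ) = 2 * t - 1 :=
  congrArg Subtype.val (projIcc_of_mem (zero_le_one' ℝ)
    (unitInterval.two_mul_sub_one_mem_iff.2 ⟨ht, t.2.2⟩))

variable {x y z : X} {γ : Path x y} {σ : Path y z}

lemma path_trans_apply_of_le_half {t : I01} (ht : (t : ℝ) ≤ 1 / 2) :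
    γ.trans σ t = γ (stretchLeft t) := by
  rw [← Path.extend_extends', Path.extend_trans_of_le_half _ _ ht]
  rfl

lemma path_trans_apply_of_half_le {t : I01} (ht : 1 / 2 ≤ (t : ℝ)) :
    γ.trans σ t = σ (stretchRight t) := by
  rw [← Path.extend_extends', Path.extend_trans_of_half_le _ _ ht]
  rfl

lemma eventually_dist_path_trans_across_half
    (hγσ : ∀ᶠ u : I01 × I01 in 𝓝 (pt1, pt0), dist (γ u.1) (σ u.2) = L * ((1 - u.1) + u.2))
    (t : I01) :
    ∀ᶠ u : I01 × I01 in 𝓝 (t, t), (u.1 : ℝ) ≤ 1 / 2 → 1 / 2 ≤ (u.2 : ℝ) →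
      dist (γ.trans σ u.1) (γ.trans σ u.2) = 2 * L * |(u.1 : ℝ) - u.2| := by
  rcases lt_trichotomy (t : ℝ) (1 / 2) with ht | ht | ht
  · have hlt : ∀ᶠ u : I01 × I01 in 𝓝 (t, t), (u.2 : ℝ) < 1 / 2 :=
      ContinuousAt.eventually_lt (by fun_prop) continuousAt_const ht
    filter_upwards [hlt] with u hu _ hu'
    exact absurd hu hu'.not_gt
  · have hlim : Tendsto (fun u : I01 × I01 ↦ (stretchLeft u.1, stretchRight u.2)) (𝓝 (t, t))
        (𝓝 (pt1, pt0)) :=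
      Continuous.tendsto' (by fun_prop) _ _ (Prod.ext
        (Subtype.ext (by rw [coe_stretchLeft ht.le, ht, coe_pt1]; norm_num))
        (Subtype.ext (by rw [coe_stretchRight ht.ge, ht, coe_pt0]; norm_num)))
    filter_upwards [hlim.eventually hγσ] with u hu h1 h2
    rw [path_trans_apply_of_le_half h1, path_trans_apply_of_half_le h2, hu, coe_stretchLeft h1,
      coe_stretchRight h2, abs_sub_comm, abs_of_nonneg (sub_nonneg.2 (h1.trans h2))]
    ring
  · have hlt : ∀ᶠ u : I01 × I01 in 𝓝 (t, t), 1 / 2 < (u.1 : ℝ) :=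
      ContinuousAt.eventually_lt continuousAt_const (by fun_prop) ht
    filter_upwards [hlt] with u hu hu'
    exact absurd hu hu'.not_gt

lemma IsLocGeod.path_trans (hγ : IsLocGeod γ.toContinuousMap L)
    (hσ : IsLocGeod σ.toContinuousMap L)
    (hγσ : ∀ᶠ u : I01 × I01 in 𝓝 (pt1, pt0), dist (γ u.1) (σ u.2) = L * ((1 - u.1) + u.2)) :
    IsLocGeod (γ.trans σ).toContinuousMap (2 * L) := by
  refine isLocGeod_iff_eventually.2 ⟨mul_nonneg two_pos.le hγ.1, fun t ↦ ?_⟩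
  have hleft := hγ.eventually_dist_eq_of_eqOn_comp (γ := (γ.trans σ).toContinuousMap) (k := 2)
    stretchLeft.continuous (A := {s | (s : ℝ) ≤ 1 / 2}) (fun s hs ↦ path_trans_apply_of_le_half hs)
    (fun s hs s' hs' ↦ by
      rw [coe_stretchLeft hs, coe_stretchLeft hs', ← mul_sub, abs_mul, abs_two]) t
  have hright := hσ.eventually_dist_eq_of_eqOn_comp (γ := (γ.trans σ).toContinuousMap) (k := 2)
    stretchRight.continuous (A := {s | 1 / 2 ≤ (s : ℝ)})
    (fun s hs ↦ path_trans_apply_of_half_le hs)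
    (fun s hs s' hs' ↦ by
      rw [coe_stretchRight hs, coe_stretchRight hs', sub_sub_sub_cancel_right, ← mul_sub, abs_mul,
        abs_two]) t
  have hacross := eventually_dist_path_trans_across_half hγσ t
  filter_upwards [hleft, hright, hacross, (continuous_swap.tendsto (t, t)).eventually hacross]
    with u hll hrr hlr hrl
  rcases le_total (u.1 : ℝ) (1 / 2) with h1 | h1 <;> rcases le_total (u.2 : ℝ) (1 / 2) with h2 | h2
  · exact hll h1 h2
  · exact hlr h1 h2
  · rw [dist_comm, abs_sub_comm]
    exact hrl h2 h1
  · exact hrr h1 h2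

end LocalGeodesics

section GeodFrom

/-- The geodesics of length at most `R` issuing in `p`: the part of `X̃_p` cut out by
minimality and a length bound, which is compact when `X` is proper. -/
def GeodFrom (p : X) (R : ℝ) : Set C(I01, X) := {γ | (∃ L ≤ R, IsGeod γ L) ∧ γ pt0 = p}

variable {p : X} {R : ℝ} {γ σ : C(I01, X)}

lemma mem_geodFrom_iff :
    γ ∈ GeodFrom p R ↔ IsGeod γ (dist p (γ pt1)) ∧ dist p (γ pt1) ≤ R ∧ γ pt0 = p := by
  constructor
  · rintro ⟨⟨L, hLR, hγ⟩, rfl⟩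
    rw [hγ.dist_endpoints]
    exact ⟨hγ, hLR, rfl⟩
  · rintro ⟨hγ, hR, h0⟩
    exact ⟨⟨_, hR, hγ⟩, h0⟩

lemma geodFrom_mono {R' : ℝ} (h : R ≤ R') : GeodFrom p R ⊆ GeodFrom p R' :=
  fun _ ⟨⟨L, hL, hγ⟩, h0⟩ ↦ ⟨⟨L, hL.trans h, hγ⟩, h0⟩

lemma continuous_endpt : Continuous (endpt : C(I01, X) → X) := continuous_eval_const pt1

lemma isCompact_geodFrom [ProperSpace X] (p : X) (R : ℝ) : IsCompact (GeodFrom p R) := by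
  refine (isCompact_setOf_lipschitzWith_mapsTo R.toNNReal
    (isCompact_closedBall p R)).of_isClosed_subset ?_ ?_
  · have hset : GeodFrom p R = {γ | (∀ s t : I01, dist (γ s) (γ t) =
        dist p (γ pt1) * |(s : ℝ) - t|) ∧ dist p (γ pt1) ≤ R ∧ γ pt0 = p} := by
      ext γ
      simp [mem_geodFrom_iff, IsGeod]
    rw [hset]
    simp only [ofPred_and, ofPred_forall]
    exact (isClosed_iInter fun s ↦ isClosed_iInter fun t ↦ isClosed_eq (by fun_prop)
      (by fun_prop)).inter ((isClosed_le (by fun_prop) continuous_const).inter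
        (isClosed_eq (by fun_prop) continuous_const))
  · rintro γ ⟨⟨L, hLR, hγ⟩, rfl⟩
    refine ⟨hγ.lipschitzWith.weaken (Real.toNNReal_le_toNNReal hLR), fun t ↦ ?_⟩
    rw [mem_closedBall', hγ.dist_pt0_left]
    exact (mul_le_of_le_one_right hγ.1 t.2.2).trans hLR

lemma GeodFrom.eq_of_edist_lt_inj {R' : ℝ} (hγ : γ ∈ GeodFrom p R) (hσ : σ ∈ GeodFrom p R')
    (he : γ pt1 = σ pt1) (h : edist p (γ pt1) < inj p) : γ = σ := by
  by_contra hne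
  obtain ⟨⟨L, -, hγ⟩, hγ0⟩ := hγ
  obtain ⟨⟨M, -, hσ⟩, hσ0⟩ := hσ
  exact h.not_ge (iInf₂_le _ ⟨γ, σ, L, M, hγ, hσ, hγ0, rfl, hσ0, he.symm, hne⟩)

lemma GeodFrom.initialSegment_mem (hγ : γ ∈ GeodFrom p R) (s : I01) :
    initialSegment γ s ∈ GeodFrom p R := by
  obtain ⟨⟨L, hLR, hγ⟩, hγ0⟩ := hγ
  exact ⟨⟨_, (mul_le_of_le_one_right hγ.1 s.2.2).trans hLR, hγ.initialSegment s⟩,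
    (initialSegment_apply_pt0 γ s).trans hγ0⟩

lemma exists_continuousAt_geodesic [ProperSpace X] (hgeo : GeodesicSpace X) (p : X) :
    ∃ g : X → C(I01, X), (∀ x, g x ∈ GeodFrom p (dist p x) ∧ g x pt1 = x) ∧
      ∀ x, edist p x < inj p → ContinuousAt g x := by
  have hex (x : X) : ∃ γ ∈ GeodFrom p (dist p x), γ pt1 = x := by
    obtain ⟨γ, L, hγ, rfl, rfl⟩ := hgeo p x
    exact ⟨γ, ⟨⟨L, hγ.dist_endpoints.ge, hγ⟩, rfl⟩, rfl⟩
  choose g hg hg1 using hex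
  refine ⟨g, fun x ↦ ⟨hg x, hg1 x⟩, fun x hx ↦ ?_⟩
  refine (isCompact_geodFrom p (dist p x + 1)).tendsto_nhds_of_unique_mapClusterPt ?_
    fun γ hγ hcluster ↦ ?_
  · filter_upwards [(show Continuous (dist p) by fun_prop).continuousAt.eventually_lt
      continuousAt_const (lt_add_one (dist p x))] with y hy
    exact geodFrom_mono hy.le (hg y)
  · have hγ1 : γ pt1 = x := by
      have hlim := hcluster.continuousAt_comp continuous_endpt.continuousAt
      rw [show endpt ∘ g = id from funext hg1] at hlim
      exact eq_of_nhds_neBot hlim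
    exact GeodFrom.eq_of_edist_lt_inj hγ (hg x) (by rw [hγ1, hg1]) (by rwa [hγ1])

lemma joinedIn_geodFrom [ProperSpace X] (hgeo : GeodesicSpace X)
    (hγ : γ ∈ GeodFrom p R) (hσ : σ ∈ GeodFrom p R) (hR : ENNReal.ofReal R ≤ inj p)
    (h : dist p (γ pt1) + dist (γ pt1) (σ pt1) + dist p (σ pt1) < 2 * R) :
    JoinedIn (GeodFrom p R ∩ endpt ⁻¹' closedBall (γ pt1) (dist (γ pt1) (σ pt1))) γ σ := by
  obtain ⟨g, hg, hgcont⟩ := exists_continuousAt_geodesic hgeo p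
  obtain ⟨η, M, hη, hη0, hη1⟩ := hgeo (γ pt1) (σ pt1)
  have hsum (u : I01) :
      dist (γ pt1) (η u) + dist (η u) (σ pt1) = dist (γ pt1) (σ pt1) := by
    rw [← hη0, ← hη1, hη.dist_pt0_left, hη.dist_pt1_right, hη.dist_endpoints]
    ring
  have hlt (u : I01) : dist p (η u) < R := by
    linarith [hsum u, dist_triangle p (γ pt1) (η u), dist_triangle_right p (η u) (σ pt1)]
  have hball (u : I01) : edist p (η u) < inj p := by
    rw [edist_dist]
    exact ((ENNReal.ofReal_lt_ofReal_iff (dist_nonneg.trans_lt (hlt u))).2 (hlt u)).trans_le hR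
  have hmem (u : I01) : g (η u) ∈ GeodFrom p R := geodFrom_mono (hlt u).le (hg _).1
  have huniq {c : C(I01, X)} (hc : c ∈ GeodFrom p R) {u : I01} (hu : η u = c pt1) :
      g (η u) = c :=
    GeodFrom.eq_of_edist_lt_inj (hmem u) hc ((hg _).2.trans hu) ((hg _).2.symm ▸ hball u)
  have hcont : Continuous (g ∘ η) := continuous_iff_continuousAt.2 fun u ↦
    (hgcont _ (hball u)).comp η.continuous.continuousAt
  have hclose (u : I01) : g (η u) pt1 ∈ closedBall (γ pt1) (dist (γ pt1) (σ pt1)) := by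
    rw [(hg _).2, mem_closedBall', ← hsum u]
    exact le_add_of_nonneg_right dist_nonneg
  exact ⟨⟨⟨g ∘ η, hcont⟩, huniq hγ hη0, huniq hσ hη1⟩, fun u ↦ ⟨hmem u, hclose u⟩⟩

end GeodFrom

section Conjugate

variable {p : X} {R : ℝ} {γ : C(I01, X)}

lemma exists_mem_nhdsWithin_injOn_endpt {L : ℝ} (hγ : IsLocGeod γ L) (h0 : γ pt0 = p)
    (hL : ENNReal.ofReal L < conjRad p) : ∃ U ∈ 𝓝[LocGeodFrom p] γ, InjOn endpt U := by
  have hnc : ¬ ConjugateAlong p γ := fun hc ↦ hL.not_ge (sInf_le ⟨γ, L, hγ, h0, hc, rfl⟩)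
  have hmem : γ ∈ LocGeodFrom p := ⟨⟨L, hγ⟩, h0⟩
  obtain ⟨U, -, hU, hemb⟩ := not_not.1 fun h ↦ hnc ⟨hmem, h⟩
  exact ⟨U, hU, injOn_iff_injective.2 hemb.injective⟩

lemma geodFrom_subset_locGeodFrom : GeodFrom p R ⊆ LocGeodFrom p :=
  fun _ ⟨⟨L, _, hγ⟩, h0⟩ ↦ ⟨⟨L, hγ.isLocGeod⟩, h0⟩

lemma exists_mem_nhdsWithin_geodFrom_injOn_endpt (hR : ENNReal.ofReal R < conjRad p)
    (hγ : γ ∈ GeodFrom p R) : ∃ U ∈ 𝓝[GeodFrom p R] γ, InjOn endpt U := by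
  obtain ⟨⟨L, hLR, hgeod⟩, h0⟩ := hγ
  obtain ⟨U, hU, hinj⟩ := exists_mem_nhdsWithin_injOn_endpt hgeod.isLocGeod h0
    ((ENNReal.ofReal_le_ofReal hLR).trans_lt hR)
  exact ⟨U, nhdsWithin_mono γ geodFrom_subset_locGeodFrom hU, hinj⟩

lemma isLocallyInjective_domRestrict_endpt (hR : ENNReal.ofReal R < conjRad p) :
    IsLocallyInjective ((GeodFrom p R).domRestrict endpt) := by
  refine isLocallyInjective_iff_nhds.2 fun γ ↦ ?_
  obtain ⟨U, hU, hinj⟩ := exists_mem_nhdsWithin_geodFrom_injOn_endpt hR γ.2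
  exact ⟨_, preimage_coe_mem_nhds_subtype.2 hU,
    fun c hc d hd hcd ↦ Subtype.ext (hinj hc hd hcd)⟩

lemma isCompact_cut_inter_closedBall [ProperSpace X] (hR : ENNReal.ofReal R < conjRad p) :
    IsCompact (Cut p ∩ closedBall p R) := by
  have : CompactSpace (GeodFrom p R) := isCompact_iff_compactSpace.1 (isCompact_geodFrom p R)
  let f := (GeodFrom p R).domRestrict endpt
  have hf : Continuous f := continuous_endpt.comp continuous_subtype_val
  have himage : Cut p ∩ closedBall p R = (fun x ↦ f x.fst) '' f.pullbackDiagonalᶜ := by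
    ext q
    constructor
    · rintro ⟨⟨γ, σ, L, M, hγ, hσ, hγ0, rfl, hσ0, he, hne⟩, hq⟩
      rw [mem_closedBall'] at hq
      have hγR : γ ∈ GeodFrom p R := ⟨⟨L, by rwa [← hγ.dist_endpoints, hγ0], hγ⟩, hγ0⟩
      have hσR : σ ∈ GeodFrom p R := ⟨⟨M, by rwa [← hσ.dist_endpoints, hσ0, he], hσ⟩, hσ0⟩
      exact ⟨⟨(⟨γ, hγR⟩, ⟨σ, hσR⟩), he.symm⟩, fun h ↦ hne (congrArg Subtype.val h), rfl⟩
    · rintro ⟨⟨⟨⟨γ, hγ⟩, ⟨σ, hσ⟩⟩, he⟩, hne, rfl⟩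
      obtain ⟨hγgeod, hγR, hγ0⟩ := mem_geodFrom_iff.1 hγ
      obtain ⟨hσgeod, -, hσ0⟩ := mem_geodFrom_iff.1 hσ
      exact ⟨⟨γ, σ, _, _, hγgeod, hσgeod, hγ0, rfl, hσ0, he.symm, fun h ↦ hne (Subtype.ext h)⟩,
        mem_closedBall'.2 hγR⟩
  rw [himage]
  exact (isCompact_compl_pullbackDiagonal hf (isLocallyInjective_domRestrict_endpt hR)).image
    (hf.comp (continuous_fst.comp continuous_subtype_val))

lemma exists_mem_cut_edist_eq_inj [ProperSpace X] (h : inj p < conjRad p) :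
    ∃ q ∈ Cut p, edist p q = inj p := by
  obtain ⟨R, hR0, hinjR, hRconj⟩ := ENNReal.lt_iff_exists_real_btwn.1 h
  obtain ⟨q₀, hq₀, hq₀R⟩ : ∃ q ∈ Cut p, edist p q < ENNReal.ofReal R := by
    simpa only [inj, iInf_lt_iff, exists_prop] using hinjR
  have mem_closedBall_of_le {q : X} (hq : edist p q ≤ ENNReal.ofReal R) : q ∈ closedBall p R := by
    rwa [mem_closedBall', ← edist_le_ofReal hR0]
  obtain ⟨q, ⟨hq, -⟩, hmin⟩ := (isCompact_cut_inter_closedBall hRconj).exists_isMinOn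
    ⟨q₀, hq₀, mem_closedBall_of_le hq₀R.le⟩ (f := edist p) (by fun_prop)
  refine ⟨q, hq, le_antisymm (le_iInf₂ fun q' hq' ↦ ?_) (iInf₂_le q hq)⟩
  rcases le_total (edist p q') (edist p q₀) with hle | hle
  · exact hmin ⟨hq', mem_closedBall_of_le (hle.trans hq₀R.le)⟩
  · exact (hmin ⟨hq₀, mem_closedBall_of_le hq₀R.le⟩).trans hle

end Conjugate

section Klingenberg

variable {p : X} {γ σ : C(I01, X)} {L : ℝ}

lemma eventually_dist_eq_of_le_inj [ProperSpace X] (hgeo : GeodesicSpace X)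
    (hγ : IsGeod γ L) (hσ : IsGeod σ L) (hγ0 : γ pt0 = p) (hσ0 : σ pt0 = p)
    (he : γ pt1 = σ pt1) (hne : γ ≠ σ) (hinj : ENNReal.ofReal L ≤ inj p)
    (hconj : ENNReal.ofReal L < conjRad p) :
    ∀ᶠ u : I01 × I01 in 𝓝 (pt1, pt1), dist (γ u.1) (σ u.2) = L * ((1 - u.1) + (1 - u.2)) := by
  have hγL : γ ∈ GeodFrom p L := ⟨⟨L, le_rfl, hγ⟩, hγ0⟩
  have hσL : σ ∈ GeodFrom p L := ⟨⟨L, le_rfl, hσ⟩, hσ0⟩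
  obtain ⟨V, hV, hnot⟩ := exists_mem_nhds_eventually_not_joinedIn (isCompact_geodFrom p L)
    continuous_endpt.continuousOn hγL hσL (exists_mem_nhdsWithin_geodFrom_injOn_endpt hconj hγL)
    he hne
  obtain ⟨δ, hδ, hδV⟩ := Metric.mem_nhds_iff.1 hV
  have hseg : Tendsto (fun u : I01 × I01 ↦ (initialSegment γ u.1, initialSegment σ u.2))
      (𝓝 (pt1, pt1)) (𝓝 (γ, σ)) :=
    Continuous.tendsto' (by fun_prop) _ _ (by simp only [initialSegment_pt1])
  have hsmall : ∀ᶠ u : I01 × I01 in 𝓝 (pt1, pt1),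
      dist (γ u.1) (γ pt1) + dist (γ u.1) (σ u.2) < δ :=
    ContinuousAt.eventually_lt (by fun_prop) continuousAt_const (by simpa [he] using hδ)
  filter_upwards [hseg.eventually hnot, hsmall] with ⟨s, t⟩ hnot hsmall
  have hle : dist (γ s) (σ t) ≤ L * ((1 - s) + (1 - t)) := by
    rw [mul_add, ← hγ.dist_pt1_right, ← hσ.dist_pt1_right, he]
    exact dist_triangle_right _ _ _
  refine hle.eq_of_not_lt fun hlt ↦ hnot ?_
  have hjoin := joinedIn_geodFrom hgeo (GeodFrom.initialSegment_mem hγL s)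
    (GeodFrom.initialSegment_mem hσL t) hinj (by
      rw [initialSegment_apply_pt1, initialSegment_apply_pt1, ← hγ0, hγ.dist_pt0_left, hγ0, ← hσ0,
        hσ.dist_pt0_left]
      linarith)
  rw [initialSegment_apply_pt1, initialSegment_apply_pt1] at hjoin
  refine hjoin.mono (inter_subset_inter_right _ (preimage_mono fun z hz ↦ hδV ?_))
  rw [mem_closedBall] at hz
  exact (dist_triangle z (γ s) (γ pt1)).trans_lt (by linarith)

lemma exists_isLocGeod_trans_symm [ProperSpace X] (hgeo : GeodesicSpace X)
    (h : inj p < conjRad p) :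
    ∃ (q : X) (γ σ : Path p q), γ ≠ σ ∧ IsGeod γ.toContinuousMap (inj p).toReal ∧
      IsGeod σ.toContinuousMap (inj p).toReal ∧
      IsLocGeod (γ.trans σ.symm).toContinuousMap (2 * (inj p).toReal) := by
  have hfin : ENNReal.ofReal (inj p).toReal = inj p := ENNReal.ofReal_toReal h.ne_top
  obtain ⟨q, ⟨γ, σ, L, M, hγ, hσ, hγ0, hγ1, hσ0, hσ1, hne⟩, hq⟩ := exists_mem_cut_edist_eq_inj h
  have hdist : (inj p).toReal = dist p q := by
    rw [← hq, edist_dist, ENNReal.toReal_ofReal dist_nonneg]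
  obtain rfl : L = (inj p).toReal := by rw [hdist, ← hγ0, ← hγ1, hγ.dist_endpoints]
  obtain rfl : M = (inj p).toReal := by rw [hdist, ← hσ0, ← hσ1, hσ.dist_endpoints]
  let γ' : Path p q := ⟨γ, hγ0, hγ1⟩
  let σ' : Path p q := ⟨σ, hσ0, hσ1⟩
  refine ⟨q, γ', σ', fun h ↦ hne (congrArg Path.toContinuousMap h), hγ, hσ,
    hγ.isLocGeod.path_trans (IsGeod.path_symm (γ := σ') hσ).isLocGeod ?_⟩
  have hstraight := eventually_dist_eq_of_le_inj hgeo hγ hσ hγ0 hσ0 (hγ1.trans hσ1.symm) hne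
    hfin.le (hfin.trans_lt h)
  have hlim : Tendsto (fun u : I01 × I01 ↦ (u.1, unitInterval.symm u.2)) (𝓝 (pt1, pt0))
      (𝓝 (pt1, pt1)) :=
    Continuous.tendsto' (by fun_prop) _ _ (Prod.ext rfl unitInterval.symm_zero)
  filter_upwards [hlim.eventually hstraight] with u hu
  rw [unitInterval.coe_symm_eq, sub_sub_cancel] at hu
  exact hu

end Klingenberg

section Subspace

variable {L M : ℝ}

lemma inj_apply_le_of_isometry {Y : Type*} [MetricSpace Y] {f : Y → X} (hf : Isometry f) (p : Y) :
    inj (f p) ≤ inj p := by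
  refine le_iInf₂ fun q ⟨γ, σ, L, M, hγ, hσ, hγ0, hγ1, hσ0, hσ1, hne⟩ ↦ ?_
  let F : C(Y, X) := ⟨f, hf.continuous⟩
  rw [← hf.edist_eq]
  exact iInf₂_le (f q) ⟨F.comp γ, F.comp σ, L, M, hγ.comp_isometry hf, hσ.comp_isometry hf,
    congrArg f hγ0, congrArg f hγ1, congrArg f hσ0, congrArg f hσ1,
    fun h ↦ hne (ContinuousMap.cancel_left hf.injective |>.1 h)⟩

lemma inj_subtype_le_edist {C : Set X} {p : C} {q : X} {γ σ : Path (p : X) q} (hne : γ ≠ σ)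
    (hγ : IsGeod γ.toContinuousMap L) (hσ : IsGeod σ.toContinuousMap M)
    (hγC : range γ ⊆ C) (hσC : range σ ⊆ C) : inj p ≤ edist (p : X) q := by
  rw [range_subset_iff] at hγC hσC
  let γ' : C(I01, C) := ⟨fun t ↦ ⟨γ t, hγC t⟩, by fun_prop⟩
  let σ' : C(I01, C) := ⟨fun t ↦ ⟨σ t, hσC t⟩, by fun_prop⟩
  have hq : q ∈ C := γ.target ▸ hγC 1
  exact iInf₂_le (⟨q, hq⟩ : C) ⟨γ', σ', L, M, hγ, hσ, Subtype.ext γ.source, Subtype.ext γ.target,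
    Subtype.ext σ.source, Subtype.ext σ.target,
    fun h ↦ hne (Path.ext (funext fun t ↦ congrArg Subtype.val (DFunLike.congr_fun h t)))⟩

end Subspace

theorem inj_eq_inj_of_totallyConvex_general {X : Type*} [MetricSpace X] [ProperSpace X]
    (hgeo : GeodesicSpace X) (C : Set X) (p : X) (hp : p ∈ C)
    (hloop : ∀ (γ : Path p p) (L : ℝ), IsLocGeod γ.toContinuousMap L → range γ ⊆ C)
    (h : inj p < conjRad p) : inj p = inj (⟨p, hp⟩ : C) := by
  refine le_antisymm (inj_apply_le_of_isometry isometry_subtype_coe (⟨p, hp⟩ : C)) ?_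
  obtain ⟨q, γ, σ, hne, hγ, hσ, hloc⟩ := exists_isLocGeod_trans_symm hgeo h
  have hsub := hloop _ _ hloc
  rw [Path.trans_range, Path.symm_range, union_subset_iff] at hsub
  calc inj (⟨p, hp⟩ : C) ≤ edist p q := inj_subtype_le_edist hne hγ hσ hsub.1 hsub.2
    _ = ENNReal.ofReal (inj p).toReal := by
      rw [edist_dist, ← hγ.dist_endpoints]
      exact congrArg₂ (fun x y ↦ ENNReal.ofReal (dist x y)) γ.source.symm γ.target.symm
    _ = inj p := ENNReal.ofReal_toReal h.ne_top

/-- Let `X` be a proper geodesic metric space, `C ⊆ X` a closed totally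
convex subset and `p ∈ C`. If `0 < inj_X p < conj X`, then `inj_X p = inj_C p`, the latter
computed in the metric space `C` with the induced metric. -/
theorem inj_eq_inj_of_totallyConvex {X : Type*} [MetricSpace X] [ProperSpace X]
    (hgeo : GeodesicSpace X) (C : Set X) (hCcl : IsClosed C) (hCtc : TotallyConvex C)
    (p : X) (hp : p ∈ C) (h0 : 0 < inj p) (h1 : inj p < conjSpace X) :
    inj p = inj (⟨p, hp⟩ : C) := by
  exact inj_eq_inj_of_totallyConvex_general hgeo C p hp
    (fun γ L hγ ↦ range_subset_iff.2 (hCtc.2 _ L hγ (γ.source.symm ▸ hp) (γ.target.symm ▸ hp)))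
    (h1.trans_le (iInf_le _ p))

end InjSoul
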